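/- Suppose the group homomorphism Φ : (Ĝ)^V → (Ĝ)^E defined by Φ((χ_v)_{v∈V})(ℓ) = Π_{v∈V} χ_v^{ε_v(ℓ)} is injective. Then the unital ℂ-subalgebra of End_ℂ(H) generated by all right-translation operators R^g_ℓ (ℓ ∈ E, g ∈ G) and all diagonal character operators S^χ_v (v ∈ V, χ ∈ Ĝ) is isomorphic as a ℂ-algebra to the direct sum of |G|^{|E|−|V|} copies of the matrix algebra M_{|G|^{|V|}}(ℂ). -/

import Mathlib

noncomputable section

open scoped BigOperators

/-- The Hilbert space `H = ℂ[G^E]`, realized as functions `(E → G) → ℂ`;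
the basis ket `|f⟩` is the indicator function of `f : E → G`. -/
abbrev HL (G E : Type) : Type := (E → G) → ℂ

variable (G : Type) [CommGroup G] [Fintype G] [DecidableEq G]
  (E V : Type) [Fintype E] [DecidableEq E] [Fintype V]

/-- `R^g_ℓ`: right translation at the edge `ℓ`, `|f⟩ ↦ |f'⟩` with
`f'(ℓ) = f(ℓ)·g` and `f' = f` elsewhere. -/
def RopL (ℓ : E) (g : G) : Module.End ℂ (HL G E) :=
  LinearMap.funLeft ℂ ℂ fun x => Function.update x ℓ (x ℓ * g⁻¹)

/-- `S^χ_v`: the diagonal character operator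
`S^χ_v |f⟩ = (∏_{ℓ ∈ E} χ(f(ℓ))^{ε_v(ℓ)}) |f⟩`. -/
def SopL (ε : V → E → ℤ) (v : V) (χ : G →* ℂˣ) : Module.End ℂ (HL G E) where
  toFun f := fun x => (∏ ℓ : E, ((χ (x ℓ) ^ ε v ℓ : ℂˣ) : ℂ)) * f x
  map_add' f₁ f₂ := by funext x; simp only [Pi.add_apply]; ring
  map_smul' r f := by
    funext x
    simp only [Pi.smul_apply, smul_eq_mul, RingHom.id_apply]
    ring

/-!
Work in the basis of `ℂ[G^E]` formed by the characters of `G^E`. Translations are diagonal there,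
and since the evaluations at points of `G^E` span all functions on the dual group, they generate the
algebra of all diagonal matrices. The operators `S^χ_v` are the multiplications by the characters in
the image `B` of `Φ`, up to products; they permute the basis within the cosets of `B`, acting
transitively on each coset. Hence the algebra consists of all matrices that are block diagonal for
the partition of the dual of `G^E` into cosets of `B`. There are `[Ĝ^E : B]` blocks of size `|B|`,
and `Φ` injective gives `|B| = |G|^|V|` and `[Ĝ^E : B] = |G|^(|E|-|V|)`.
-/

section BlockSubalgebra

variable {n o R : Type*} [Fintype n] [DecidableEq n]

/-- The algebra of matrices whose nonzero entries `M i j` all satisfy `π i = π j`, that is, the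
matrices that are block diagonal for the partition of `n` into the fibres of `π`. -/
def blockSubalgebra [CommSemiring R] (π : n → o) : Subalgebra R (Matrix n n R) where
  carrier := {M | ∀ i j, π i ≠ π j → M i j = 0}
  mul_mem' {M N} hM hN i j hij := by
    rw [Matrix.mul_apply]
    refine Finset.sum_eq_zero fun l _ => ?_
    by_cases hil : π i = π l
    · rw [hN l j (hil ▸ hij), mul_zero]
    · rw [hM i l hil, zero_mul]
  add_mem' {M N} hM hN i j hij := by rw [Matrix.add_apply, hM i j hij, hN i j hij, add_zero]
  algebraMap_mem' r i j hij := by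
    rw [Matrix.algebraMap_matrix_apply, if_neg (ne_of_apply_ne π hij)]

/-- The isomorphism sending a block diagonal matrix to the family of its diagonal blocks. -/
def blockSubalgebraEquivPi (R : Type*) [CommSemiring R] [DecidableEq o] (π : n → o) :
    (blockSubalgebra π : Subalgebra R (Matrix n n R)) ≃ₐ[R]
      ∀ k, Matrix {i // π i = k} {i // π i = k} R where
  toFun M k := M.1.submatrix Subtype.val Subtype.val
  invFun N := ⟨Matrix.of fun i j => if h : π j = π i then N (π i) ⟨i, rfl⟩ ⟨j, h⟩ else 0,
    fun _ _ hij => dif_neg hij.symm⟩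
  left_inv M := by
    ext i j
    by_cases h : π j = π i
    · simp [h]
    · simp [h, M.2 i j (Ne.symm h)]
  right_inv N := by
    ext k ⟨i, rfl⟩ ⟨j, hj⟩
    simp [hj]
  map_mul' M N := by
    ext k ⟨i, rfl⟩ ⟨j, hj⟩
    have hzero : ∑ l : {l // π l ≠ π i}, M.1 i l * N.1 l j = 0 :=
      Finset.sum_eq_zero fun l _ => by rw [M.2 i l l.2.symm, zero_mul]
    simp only [Matrix.submatrix_apply, Matrix.mul_apply, MulMemClass.coe_mul, Pi.mul_apply]
    rw [← Fintype.sum_subtype_add_sum_subtype (fun l => π l = π i), hzero, add_zero]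
  map_add' M N := rfl
  commutes' r := by
    ext k i j
    simp [Matrix.algebraMap_matrix_apply, Subtype.ext_iff]

theorem nonempty_blockSubalgebra_algEquiv [CommSemiring R] [Finite o] {π : n → o} {c d : ℕ}
    (hc : Nat.card o = c) (hd : ∀ k, Nat.card {i // π i = k} = d) :
    Nonempty ((blockSubalgebra π : Subalgebra R (Matrix n n R)) ≃ₐ[R]
      (Fin c → Matrix (Fin d) (Fin d) R)) := by
  classical
  have resizeBlocks := AlgEquiv.piCongrRight fun k =>
    Matrix.reindexAlgEquiv R R (Finite.equivFinOfCardEq (hd k))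
  have permuteBlocks := AlgEquiv.piCongrLeft R (fun _ : Fin c => Matrix (Fin d) (Fin d) R)
    (Finite.equivFinOfCardEq hc)
  exact ⟨(blockSubalgebraEquivPi R π).trans (resizeBlocks.trans permuteBlocks)⟩

theorem blockSubalgebra_le [CommSemiring R] {π : n → o} {S : Subalgebra R (Matrix n n R)}
    (hdiag : ∀ i, Matrix.single i i 1 ∈ S) (hblock : ∀ i j, π i = π j → ∃ N ∈ S, N i j = 1) :
    blockSubalgebra π ≤ S := by
  intro M hM
  rw [Matrix.matrix_eq_sum_single M]
  refine sum_mem fun i _ => sum_mem fun j _ => ?_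
  by_cases hij : π i = π j
  · obtain ⟨N, hN, hNij⟩ := hblock i j hij
    have hsingle : Matrix.single i j (M i j) =
        M i j • (Matrix.single i i 1 * N * Matrix.single j j 1) := by
      rw [Matrix.single_mul_mul_single, hNij, Matrix.smul_single, one_mul, mul_one, smul_eq_mul,
        mul_one]
    rw [hsingle]
    exact S.smul_mem (mul_mem (mul_mem (hdiag i) hN) (hdiag j)) _
  · rw [hM i j hij, Matrix.single_zero]
    exact zero_mem S

end BlockSubalgebra

theorem card_fiber_quotientGroupMk {C : Type*} [Group C] (B : Subgroup C) (q : C ⧸ B) :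
    Nat.card {c : C // (c : C ⧸ B) = q} = Nat.card B :=
  (QuotientGroup.card_preimage_mk B {q}).trans
    ((congrArg _ Nat.card_unique).trans (mul_one _))

section Characters

/-- The group of characters of `A` with values in `Mˣ`; for `M = ℂ` it is the dual group `Â`. Taking
`M` to be a `CommMonoid` gives `Mˣ` the monoid structure underlying its `CommGroup` instance also
when `M` is a field, so that lemmas about commutative groups rewrite in the character group. -/
abbrev CharacterGroup (A M : Type*) [CommGroup A] [CommMonoid M] : Type _ :=
  A →* Mˣ

variable {A k : Type*} [CommGroup A] [Field k]

theorem span_range_monoidHom_eq_top {ι M : Type*} [MulOneClass M] [Finite M] {χ : ι → M →* k}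
    (hχ : Function.Injective χ) (hcard : Nat.card ι = Nat.card M) :
    Submodule.span k (Set.range fun i => (χ i : M → k)) = ⊤ := by
  have : Finite ι := Nat.finite_of_card_ne_zero (hcard ▸ Nat.card_pos.ne')
  have := Fintype.ofFinite M
  have := Fintype.ofFinite ι
  refine ((linearIndependent_monoidHom M k).comp χ hχ).span_eq_top_of_card_eq_finrank' ?_
  rw [Module.finrank_fintype_fun_eq_card, ← Nat.card_eq_fintype_card, hcard,
    Nat.card_eq_fintype_card]

/-- Translation of functions on `A` by `a`, normalised to send the indicator function of `x` to that
of `x * a`. -/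
def translation : A →* Module.End k (A → k) where
  toFun a := LinearMap.funLeft k k (· * a⁻¹)
  map_one' := by ext; simp [LinearMap.funLeft_apply]
  map_mul' a b := by ext; simp [LinearMap.funLeft_apply, mul_assoc, mul_comm]

theorem translation_apply (a : A) (f : A → k) (x : A) : translation a f x = f (x * a⁻¹) :=
  rfl

/-- The diagonal operator multiplying functions on `A` by a character. -/
def modulation : CharacterGroup A k →* Module.End k (A → k) where
  toFun χ := LinearMap.mulLeft k fun x => (χ x : k)
  map_one' := by ext; simp
  map_mul' χ ψ := by ext; simp [mul_assoc]

theorem modulation_apply (χ : CharacterGroup A k) (f : A → k) (x : A) :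
    modulation χ f x = χ x * f x :=
  rfl

/-- The algebra generated by all translations and by the modulations by characters in `B`. The
algebra generated by the `R^g_ℓ` and `S^χ_v` is the case `A = G ^ E` with `B` the image of `Φ`. -/
def weylHeisenbergSubalgebra (B : Subgroup (CharacterGroup A k)) :
    Subalgebra k (Module.End k (A → k)) :=
  Algebra.adjoin k (Set.range translation ∪ modulation '' (B : Set (CharacterGroup A k)))

section Pi

variable (ι A M : Type*) [Fintype ι] [CommGroup A] [CommMonoid M]

/-- The isomorphism from `Â ^ ι` to the dual of `A ^ ι` sending a family of characters to its
external product; it turns the values of `Φ` into characters of `G ^ E`. -/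
def piCharacterEquiv : (ι → CharacterGroup A M) ≃* CharacterGroup (ι → A) M :=
  letI := Classical.decEq ι
  (Pi.monoidHomMulEquiv (fun _ : ι => A) Mˣ).symm

variable {ι A M} in
theorem piCharacterEquiv_apply (χ : ι → CharacterGroup A M) (x : ι → A) :
    piCharacterEquiv ι A M χ x = ∏ i, χ i (x i) := by
  simp [piCharacterEquiv, Pi.monoidHomMulEquiv]

end Pi

section FourierBasis

variable [Finite A] [HasEnoughRootsOfUnity k (Monoid.exponent A)]

/-- The basis of the space of functions on `A` formed by the characters of `A`. -/
def characterBasis : Module.Basis (CharacterGroup A k) k (A → k) :=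
  have hinj : Function.Injective fun χ : CharacterGroup A k => (Units.coeHom k).comp χ :=
    fun _ _ h => MonoidHom.ext fun x => Units.ext (DFunLike.congr_fun h x)
  Module.Basis.mk ((linearIndependent_monoidHom A k).comp _ hinj)
    (span_range_monoidHom_eq_top hinj
      (CommGroup.card_monoidHom_of_hasEnoughRootsOfUnity A k)).ge

theorem characterBasis_apply (χ : CharacterGroup A k) (x : A) : characterBasis χ x = (χ x : k) := by
  simp [characterBasis]

theorem span_range_eval_eq_top :
    Submodule.span k (Set.range fun (a : A) (χ : CharacterGroup A k) => (χ a : k)) = ⊤ := by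
  let eval (a : A) : CharacterGroup A k →* k :=
    { toFun χ := χ a
      map_one' := rfl
      map_mul' _ _ := rfl }
  have heval : Function.Injective eval := fun a b h =>
    (CommGroup.forall_apply_eq_apply_iff A (M := k)).mp fun χ =>
      Units.ext (DFunLike.congr_fun h χ)
  have hspan := span_range_monoidHom_eq_top heval
    (CommGroup.card_monoidHom_of_hasEnoughRootsOfUnity A k).symm
  exact hspan

theorem translation_characterBasis (a : A) (χ : CharacterGroup A k) :
    translation a (characterBasis χ) = (χ a⁻¹ : k) • characterBasis χ := by
  ext x
  simp [translation_apply, characterBasis_apply, mul_comm]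

theorem modulation_characterBasis (χ ψ : CharacterGroup A k) :
    modulation χ (characterBasis ψ) = characterBasis (ψ * χ) := by
  ext x
  rw [modulation_apply, characterBasis_apply, characterBasis_apply, MonoidHom.mul_apply,
    Units.val_mul, mul_comm]

variable [Fintype (CharacterGroup A k)] [DecidableEq (CharacterGroup A k)]

theorem toMatrixAlgEquiv_translation (a : A) :
    LinearMap.toMatrixAlgEquiv characterBasis (translation a) =
      Matrix.diagonal fun χ : CharacterGroup A k => (χ a⁻¹ : k) := by
  ext χ ψ
  rw [LinearMap.toMatrixAlgEquiv_apply, translation_characterBasis, map_smul,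
    Module.Basis.repr_self, Finsupp.smul_apply, Finsupp.single_apply, Matrix.diagonal_apply]
  obtain rfl | h := eq_or_ne ψ χ
  · rw [if_pos rfl, if_pos rfl, smul_eq_mul, mul_one]
  · rw [if_neg h, if_neg h.symm, smul_zero]

theorem toMatrixAlgEquiv_modulation_apply (χ ψ φ : CharacterGroup A k) :
    LinearMap.toMatrixAlgEquiv characterBasis (modulation χ) ψ φ =
      if φ * χ = ψ then (1 : k) else 0 := by
  rw [LinearMap.toMatrixAlgEquiv_apply, modulation_characterBasis, Module.Basis.repr_self,
    Finsupp.single_apply]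

theorem single_mem_of_toMatrixAlgEquiv_translation_mem
    {S : Subalgebra k (Matrix (CharacterGroup A k) (CharacterGroup A k) k)}
    (hS : ∀ a : A, LinearMap.toMatrixAlgEquiv characterBasis (translation a) ∈ S)
    (χ : CharacterGroup A k) : Matrix.single χ χ 1 ∈ S := by
  let D : Submodule k (CharacterGroup A k → k) :=
    S.toSubmodule.comap (Matrix.diagonalLinearMap (CharacterGroup A k) k k)
  have hD : D = ⊤ := by
    rw [eq_top_iff, ← span_range_eval_eq_top (A := A), Submodule.span_le]
    rintro _ ⟨a, rfl⟩
    have ha := hS a⁻¹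
    rw [toMatrixAlgEquiv_translation, inv_inv] at ha
    exact ha
  have hχ : Pi.single χ 1 ∈ D := hD ▸ Submodule.mem_top
  rw [← Matrix.diagonal_single]
  exact hχ

theorem map_toMatrixAlgEquiv_weylHeisenbergSubalgebra (B : Subgroup (CharacterGroup A k)) :
    (weylHeisenbergSubalgebra B).map
        (LinearMap.toMatrixAlgEquiv (characterBasis (A := A) (k := k)) :
          Module.End k (A → k) →ₐ[k] Matrix (CharacterGroup A k) (CharacterGroup A k) k) =
      blockSubalgebra (QuotientGroup.mk (s := B)) := by
  apply le_antisymm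
  · rw [Subalgebra.map_le, weylHeisenbergSubalgebra, Algebra.adjoin_le_iff]
    rintro _ (⟨a, rfl⟩ | ⟨χ, hχ, rfl⟩) ψ φ hψφ
    · exact (congr_fun₂ (toMatrixAlgEquiv_translation a) ψ φ).trans
        (Matrix.diagonal_apply_ne _ (ne_of_apply_ne _ hψφ))
    · refine (toMatrixAlgEquiv_modulation_apply χ ψ φ).trans (if_neg ?_)
      rintro rfl
      exact hψφ (QuotientGroup.mk_mul_of_mem φ hχ)
  · refine blockSubalgebra_le
      (single_mem_of_toMatrixAlgEquiv_translation_mem fun a =>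
        Subalgebra.mem_map.mpr ⟨_, Algebra.subset_adjoin (Or.inl ⟨a, rfl⟩), rfl⟩)
      fun ψ φ hψφ => ?_
    have hmem : φ⁻¹ * ψ ∈ B := QuotientGroup.eq.mp hψφ.symm
    exact ⟨_, Subalgebra.mem_map.mpr ⟨_, Algebra.subset_adjoin (Or.inr ⟨_, hmem, rfl⟩), rfl⟩,
      (toMatrixAlgEquiv_modulation_apply _ ψ φ).trans (if_pos (mul_inv_cancel_left φ ψ))⟩

end FourierBasis

theorem nonempty_weylHeisenbergSubalgebra_algEquiv [Finite A]
    [HasEnoughRootsOfUnity k (Monoid.exponent A)] (B : Subgroup (CharacterGroup A k)) :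
    Nonempty (weylHeisenbergSubalgebra B ≃ₐ[k]
      (Fin B.index → Matrix (Fin (Nat.card B)) (Fin (Nat.card B)) k)) := by
  classical
  have := Fintype.ofFinite (CharacterGroup A k)
  have toBlocks := (LinearMap.toMatrixAlgEquiv (characterBasis (A := A) (k := k))).subalgebraMap
    (weylHeisenbergSubalgebra B)
  rw [map_toMatrixAlgEquiv_weylHeisenbergSubalgebra] at toBlocks
  obtain ⟨splitBlocks⟩ := nonempty_blockSubalgebra_algEquiv (R := k) B.index_eq_card.symm
    (card_fiber_quotientGroupMk B)
  exact ⟨toBlocks.trans splitBlocks⟩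

end Characters

section ZPowHom

variable {ι κ : Type*} (C : Type*) [Fintype ι] [CommGroup C]

/-- The homomorphism `C ^ ι → C ^ κ` with integer exponent matrix `ε`; for `C` the character group
of `G` it is the map `Φ`. -/
def zpowHom (ε : ι → κ → ℤ) : (ι → C) →* (κ → C) where
  toFun c l := ∏ i, c i ^ ε i l
  map_one' := by ext; simp
  map_mul' c d := by ext; simp [mul_zpow, Finset.prod_mul_distrib]

theorem zpowHom_mulSingle [DecidableEq ι] (ε : ι → κ → ℤ) (i : ι) (c : C) :
    zpowHom C ε (Pi.mulSingle i c) = fun l => c ^ ε i l := by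
  ext l
  refine (Finset.prod_eq_single i (fun j _ hj => ?_) (by simp)).trans ?_
  · rw [Pi.mulSingle_eq_of_ne hj, one_zpow]
  · rw [Pi.mulSingle_eq_same]

end ZPowHom

theorem card_range_eq_pow {ι C D : Type*} [Fintype ι] [Group C] [Group D]
    {f : (ι → C) →* D} (hf : Function.Injective f) :
    Nat.card f.range = Nat.card C ^ Fintype.card ι := by
  rw [← Nat.card_congr (MonoidHom.ofInjective hf).toEquiv, Nat.card_fun,
    Nat.card_eq_fintype_card (α := ι)]

theorem index_range_eq_pow_sub {ι κ C : Type*} [Fintype ι] [Fintype κ] [Group C] [Finite C]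
    {f : (ι → C) →* (κ → C)} (hf : Function.Injective f) :
    f.range.index = Nat.card C ^ (Fintype.card κ - Fintype.card ι) := by
  have hcard : Nat.card C ^ Fintype.card ι * f.range.index = Nat.card C ^ Fintype.card κ := by
    rw [← card_range_eq_pow hf, f.range.card_mul_index, Nat.card_fun,
      Nat.card_eq_fintype_card (α := κ)]
  have hpos : 0 < Nat.card C ^ Fintype.card ι := pow_pos Nat.card_pos _
  obtain h | h := le_total (Fintype.card ι) (Fintype.card κ)
  · apply Nat.eq_of_mul_eq_mul_left hpos
    rw [hcard, ← pow_add, Nat.add_sub_cancel' h]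
  · have hle : f.range.index ≤ 1 := by
      refine Nat.le_of_mul_le_mul_left ?_ hpos
      rw [hcard, mul_one]
      exact Nat.pow_le_pow_right Nat.card_pos h
    rw [Nat.sub_eq_zero_of_le h, pow_zero]
    exact hle.antisymm (Nat.one_le_iff_ne_zero.mpr f.range.index_ne_zero_of_finite)

section Lattice

omit [Fintype G] [DecidableEq G]

omit [Fintype E] in
theorem RopL_eq_translation (l : E) (g : G) :
    RopL G E l g = translation (Pi.mulSingle l g) := by
  ext f x
  have hupdate : Function.update x l (x l * g⁻¹) = x * (Pi.mulSingle l g)⁻¹ := by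
    ext m
    obtain rfl | hm := eq_or_ne m l <;> simp [*]
  rw [translation_apply, ← hupdate]
  rfl

omit [DecidableEq E] in
theorem SopL_eq_modulation [DecidableEq V] (ε : V → E → ℤ) (v : V) (χ : G →* ℂˣ) :
    SopL G E V ε v χ = modulation
      (piCharacterEquiv E G ℂ (zpowHom _ ε (Pi.mulSingle v χ))) := by
  ext f x
  simp [SopL, modulation_apply, piCharacterEquiv_apply, zpowHom_mulSingle]

variable {G E V}

omit [Fintype E] in
theorem translation_mem_of_RopL_mem {S : Subalgebra ℂ (Module.End ℂ (HL G E))}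
    [Finite E] (hS : ∀ l g, RopL G E l g ∈ S) (x : E → G) : translation x ∈ S := by
  change x ∈ S.toSubmonoid.comap translation
  refine Submonoid.pi_mem_of_mulSingle_mem x fun l => ?_
  have hl := hS l (x l)
  rw [RopL_eq_translation] at hl
  exact hl

omit [DecidableEq E] in
theorem modulation_mem_of_SopL_mem {ε : V → E → ℤ} {S : Subalgebra ℂ (Module.End ℂ (HL G E))}
    (hS : ∀ v χ, SopL G E V ε v χ ∈ S) (χ : V → CharacterGroup G ℂ) :
    modulation (piCharacterEquiv E G ℂ (zpowHom _ ε χ)) ∈ S := by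
  classical
  change χ ∈ S.toSubmonoid.comap (modulation.comp
    ((piCharacterEquiv E G ℂ).toMonoidHom.comp (zpowHom _ ε)))
  refine Submonoid.pi_mem_of_mulSingle_mem χ fun v => ?_
  have hv := hS v (χ v)
  rw [SopL_eq_modulation] at hv
  exact hv

variable (G E V)

theorem adjoin_RopL_union_SopL (ε : V → E → ℤ) :
    Algebra.adjoin ℂ
        ({T : Module.End ℂ (HL G E) | ∃ (ℓ : E) (g : G), T = RopL G E ℓ g} ∪
         {T | ∃ (v : V) (χ : G →* ℂˣ), T = SopL G E V ε v χ}) =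
      weylHeisenbergSubalgebra
        ((zpowHom (CharacterGroup G ℂ) ε).range.map (piCharacterEquiv E G ℂ)) := by
  classical
  refine le_antisymm (Algebra.adjoin_mono (Set.union_subset_union ?_ ?_))
    (Algebra.adjoin_le ?_)
  · rintro _ ⟨l, g, rfl⟩
    exact ⟨_, (RopL_eq_translation G E l g).symm⟩
  · rintro _ ⟨v, χ, rfl⟩
    exact ⟨_, ⟨_, ⟨_, rfl⟩, rfl⟩, (SopL_eq_modulation G E V ε v χ).symm⟩
  · rintro _ (⟨x, rfl⟩ | ⟨_, ⟨_, ⟨χ, rfl⟩, rfl⟩, rfl⟩)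
    · exact translation_mem_of_RopL_mem
        (fun l g => Algebra.subset_adjoin (Or.inl ⟨l, g, rfl⟩)) x
    · exact modulation_mem_of_SopL_mem
        (fun v χ => Algebra.subset_adjoin (Or.inr ⟨v, χ, rfl⟩)) χ

theorem stmt19_general [Finite G] (ε : V → E → ℤ) :
    Nonempty (↥(Algebra.adjoin ℂ
        ({T : Module.End ℂ (HL G E) | ∃ (ℓ : E) (g : G), T = RopL G E ℓ g} ∪
         {T | ∃ (v : V) (χ : G →* ℂˣ), T = SopL G E V ε v χ}))
      ≃ₐ[ℂ]
      (Fin (zpowHom (CharacterGroup G ℂ) ε).range.index →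
        Matrix (Fin (Nat.card (zpowHom (CharacterGroup G ℂ) ε).range))
          (Fin (Nat.card (zpowHom (CharacterGroup G ℂ) ε).range)) ℂ)) := by
  have hequiv := nonempty_weylHeisenbergSubalgebra_algEquiv (A := E → G) (k := ℂ)
    (Subgroup.map (piCharacterEquiv E G ℂ) (zpowHom (CharacterGroup G ℂ) ε).range)
  rw [Subgroup.index_map_equiv _ (piCharacterEquiv E G ℂ),
    Subgroup.card_map_of_injective (piCharacterEquiv E G ℂ).injective] at hequiv
  rwa [adjoin_RopL_union_SopL]

end Lattice

/-- if the homomorphism `Φ : (Ĝ)^V → (Ĝ)^E`,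
`Φ((χ_v)_v)(ℓ) = ∏_v χ_v^{ε_v(ℓ)}`, is injective, then the unital ℂ-algebra generated
by all `R^g_ℓ` and all `S^χ_v` is isomorphic to the direct sum of `|G|^(|E|-|V|)`
copies of `M_{|G|^{|V|}}(ℂ)`. -/
theorem stmt19 (ε : V → E → ℤ)
    (hΦ : Function.Injective
      (fun (χ : V → (G →* ℂˣ)) => fun ℓ : E => ∏ v : V, (χ v) ^ ε v ℓ)) :
    Nonempty (↥(Algebra.adjoin ℂ
        ({T : Module.End ℂ (HL G E) | ∃ (ℓ : E) (g : G), T = RopL G E ℓ g} ∪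
         {T | ∃ (v : V) (χ : G →* ℂˣ), T = SopL G E V ε v χ}))
      ≃ₐ[ℂ]
      (Fin (Fintype.card G ^ (Fintype.card E - Fintype.card V)) →
        Matrix (Fin (Fintype.card G ^ Fintype.card V))
          (Fin (Fintype.card G ^ Fintype.card V)) ℂ))  := by
  have hdual : Nat.card (CharacterGroup G ℂ) = Fintype.card G :=
    (CommGroup.card_monoidHom_of_hasEnoughRootsOfUnity G ℂ).trans Nat.card_eq_fintype_card
  rw [← hdual, ← index_range_eq_pow_sub (f := zpowHom _ ε) hΦ,
    ← card_range_eq_pow (f := zpowHom _ ε) hΦ]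
  exact stmt19_general G E V ε
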